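/- Let (X, ⊑) be a complete lattice and let J be an arbitrary family of fuzzy intervals of X. Define ∨̇J as the pointwise infimum of the family of all fuzzy intervals A of X satisfying M ≤ A for every M ∈ J. Then ∨̇J is a fuzzy interval, M ≤ ∨̇J for every M ∈ J, and ∨̇J ≤ A for every fuzzy interval A that dominates every member of J; that is, every family of fuzzy intervals has a supremum within the set of fuzzy intervals (so the fuzzy intervals of X form a complete lattice under the pointwise order). -/

import Mathlib

/- The membership grade lattice `L = [0,1]`. -/
instance : Fact ((0:ℝ) ≤ 1) := ⟨zero_le_one⟩

/-- A subset `S` of a lattice `X` is a closed interval iff it is empty or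
of the form `[a, b] = {z : a ⊑ z ⊑ b}` for some `a b : X`. -/
def IsClosedInterval {X : Type*} [Lattice X] (S : Set X) : Prop :=
  S = ∅ ∨ ∃ a b : X, S = Set.Icc a b

/-- The `p`-cut of a fuzzy set `M : X → [0,1]` is `{x : M x ≥ p}`. -/
def cut {X : Type*} (M : X → unitInterval) (p : unitInterval) : Set X :=
  {x | p ≤ M x}

/-- A fuzzy set `M : X → [0,1]` is a fuzzy interval iff every `p`-cut
of `M` is a closed interval of `X`. -/
def IsFuzzyInterval {X : Type*} [Lattice X] (M : X → unitInterval) : Prop :=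
  ∀ p : unitInterval, IsClosedInterval (cut M p)

/-- `∨̇ J`: the pointwise infimum of all fuzzy intervals dominating every member of `J`. -/
noncomputable def fuzzySupFam {X : Type*} [Lattice X] (J : Set (X → unitInterval)) :
    X → unitInterval :=
  fun x => ⨅ A ∈ {A : X → unitInterval | IsFuzzyInterval A ∧ ∀ M ∈ J, M ≤ A}, A x

/-! Cutting at a fixed level turns pointwise infima into intersections, and in a complete lattice
the intersection of intervals `[aᵢ, bᵢ]` is `[⨆ aᵢ, ⨅ bᵢ]`. Hence fuzzy intervals are closed under
arbitrary pointwise infima, and the infimum of the fuzzy intervals dominating `J` is the least of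
them. -/

theorem iInter_Icc {X : Type*} [CompleteLattice X] {ι : Sort*} (a b : ι → X) :
    ⋂ i, Set.Icc (a i) (b i) = Set.Icc (⨆ i, a i) (⨅ i, b i) := by
  simp only [← Set.Ici_inter_Iic, Set.iInter_inter_distrib, Set.Ici_iSup, Set.Iic_iInf]

theorem IsClosedInterval.iInter {X : Type*} [CompleteLattice X] {ι : Sort*} {S : ι → Set X}
    (hS : ∀ i, IsClosedInterval (S i)) : IsClosedInterval (⋂ i, S i) := by
  by_cases hempty : ∃ i, S i = ∅
  · obtain ⟨i, hi⟩ := hempty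
    exact Or.inl (Set.subset_eq_empty (Set.iInter_subset S i) hi)
  · have hIcc : ∀ i, ∃ a b, S i = Set.Icc a b := fun i =>
      (hS i).resolve_left fun hi => hempty ⟨i, hi⟩
    choose a b hab using hIcc
    exact Or.inr ⟨⨆ i, a i, ⨅ i, b i, by simp only [hab, iInter_Icc]⟩

theorem cut_iInf {X : Type*} {ι : Sort*} (M : ι → X → unitInterval) (p : unitInterval) :
    cut (⨅ i, M i) p = ⋂ i, cut (M i) p := by
  ext x
  simp only [cut, Set.mem_ofPred_eq, Set.mem_iInter, iInf_apply, le_iInf_iff]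

theorem IsFuzzyInterval.iInf {X : Type*} [CompleteLattice X] {ι : Sort*}
    {M : ι → X → unitInterval} (hM : ∀ i, IsFuzzyInterval (M i)) :
    IsFuzzyInterval (⨅ i, M i) := fun p => by
  rw [cut_iInf]
  exact .iInter fun i => hM i p

theorem IsFuzzyInterval.sInf {X : Type*} [CompleteLattice X] {S : Set (X → unitInterval)}
    (hS : ∀ M ∈ S, IsFuzzyInterval M) : IsFuzzyInterval (sInf S) := by
  rw [sInf_eq_iInf']
  exact .iInf fun M => hS M M.2

theorem fuzzySupFam_eq_sInf {X : Type*} [Lattice X] (J : Set (X → unitInterval)) :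
    fuzzySupFam J = sInf {A | IsFuzzyInterval A ∧ ∀ M ∈ J, M ≤ A} := by
  ext x
  simp only [fuzzySupFam, sInf_eq_iInf, iInf_apply]

theorem fuzzySupFam_is_lub_general {X : Type*} [CompleteLattice X] (J : Set (X → unitInterval)) :
    IsFuzzyInterval (fuzzySupFam J) ∧ (∀ M ∈ J, M ≤ fuzzySupFam J) ∧
    ∀ A : X → unitInterval, IsFuzzyInterval A → (∀ M ∈ J, M ≤ A) →
      fuzzySupFam J ≤ A := by
  rw [fuzzySupFam_eq_sInf]
  exact ⟨.sInf fun _ hA => hA.1, fun M hM => le_sInf fun _ hA => hA.2 M hM,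
    fun _ hA hJA => sInf_le ⟨hA, hJA⟩⟩

/-- Every family `J` of fuzzy intervals of a complete lattice has a supremum `∨̇ J`
within the set of fuzzy intervals; hence the fuzzy intervals form a complete lattice. -/
theorem fuzzySupFam_is_lub {X : Type*} [CompleteLattice X]
    (J : Set (X → unitInterval)) (hJ : ∀ M ∈ J, IsFuzzyInterval M) :
    IsFuzzyInterval (fuzzySupFam J) ∧ (∀ M ∈ J, M ≤ fuzzySupFam J) ∧
    ∀ A : X → unitInterval, IsFuzzyInterval A → (∀ M ∈ J, M ≤ A) →
      fuzzySupFam J ≤ A :=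
  fuzzySupFam_is_lub_general J
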